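/- arXiv:0711.4457 — 2 statements merged into one kernel-verified Lean document; each statement's English description precedes it below -/
import Mathlib

section
/- Let α ∈ (0,2), let (S, μ) and (S̃, μ̃) be σ-finite measure spaces, and let f, g ∈ L^α(S, μ) and f̃, g̃ ∈ L^α(S̃, μ̃). If ∫_S |u f(s) + v g(s)|^α μ(ds) = ∫_{S̃} |u f̃(s̃) + v g̃(s̃)|^α μ̃(ds̃) for all u, v ∈ ℝ, then [f,g]₂ = [f̃,g̃]₂; if moreover α ∈ (1,2), then also [f,g]₁* = [f̃,g̃]₁* and [f,g]₁ = [f̃,g̃]₁. (Paper's Proposition 2.1: the dependence measures do not depend on the spectral representation of a jointly SαS pair.) -/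
open MeasureTheory Real Set Filter
open scoped ENNReal Topology

noncomputable def nrm (α : ℝ) {S : Type*} [MeasurableSpace S] (μ : Measure S) (f : S → ℝ) : ℝ :=
  (∫ s, |f s| ^ α ∂μ) ^ (1 / α)

noncomputable def dep2 (α : ℝ) {S : Type*} [MeasurableSpace S] (μ : Measure S) (f g : S → ℝ) : ℝ :=
  ∫ s, |f s * g s| ^ (α / 2) ∂μ

noncomputable def dep1s (α : ℝ) {S : Type*} [MeasurableSpace S] (μ : Measure S) (f g : S → ℝ) : ℝ :=
  ∫ s, |f s| ^ (α - 1) * |g s| ∂μ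

noncomputable def dep1 (α : ℝ) {S : Type*} [MeasurableSpace S] (μ : Measure S) (f g : S → ℝ) : ℝ :=
  dep1s α μ f g + dep1s α μ g f

/-- `f ∈ L^α(S, μ)`. -/
def MemLalpha (α : ℝ) {S : Type*} [MeasurableSpace S] (μ : Measure S) (f : S → ℝ) : Prop :=
  AEStronglyMeasurable f μ ∧ Integrable (fun s => |f s| ^ α) μ

/-- Assumption (A1) with constant ε₁. -/
def A1 (α ε₁ : ℝ) {S : Type*} [MeasurableSpace S] (μ : Measure S) (f g : S → ℝ) : Prop :=
  nrm α μ f ^ (α / 2) * nrm α μ g ^ (α / 2) - dep2 α μ f g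
    ≥ ε₁ * (nrm α μ f ^ (α / 2) * nrm α μ g ^ (α / 2))

/-- Assumption (A2) with constant ε₂. -/
def A2 (α ε₂ : ℝ) {S : Type*} [MeasurableSpace S] (μ : Measure S) (f g : S → ℝ) : Prop :=
  ∀ u v : ℝ, nrm α μ (fun s => u * f s + v * g s) ^ α
    ≥ ε₂ * (|u| ^ α * nrm α μ f ^ α + |v| ^ α * nrm α μ g ^ α)

noncomputable def Ufun (α : ℝ) {S : Type*} [MeasurableSpace S] (μ : Measure S)
    (f g : S → ℝ) (u v : ℝ) : ℝ :=
  Real.exp (-(nrm α μ (fun s => u * f s + v * g s) ^ α)) -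
    Real.exp (-(nrm α μ (fun s => u * f s) ^ α) - nrm α μ (fun s => v * g s) ^ α)

/-- signed power `a^⟨p⟩ = sign(a)|a|^p`. -/
noncomputable def spow (a p : ℝ) : ℝ := Real.sign a * |a| ^ p

noncomputable def D1 (α : ℝ) {S : Type*} [MeasurableSpace S] (μ : Measure S)
    (f g : S → ℝ) (u v : ℝ) : ℝ :=
  -α * (∫ s, spow (u * f s + v * g s) (α - 1) * f s ∂μ) *
      Real.exp (-(nrm α μ (fun s => u * f s + v * g s) ^ α)) +
    α * (∫ s, spow (u * f s) (α - 1) * f s ∂μ) *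
      Real.exp (-(nrm α μ (fun s => u * f s) ^ α) - nrm α μ (fun s => v * g s) ^ α)

noncomputable def D2 (α : ℝ) {S : Type*} [MeasurableSpace S] (μ : Measure S)
    (f g : S → ℝ) (u v : ℝ) : ℝ :=
  -(α * (α - 1)) * (∫ s, (if f s = 0 ∨ g s = 0 then (0:ℝ) else
        |u * f s + v * g s| ^ (α - 2) * (f s * g s)) ∂μ) *
      Real.exp (-(nrm α μ (fun s => u * f s + v * g s) ^ α)) +
    α ^ 2 * (∫ s, spow (u * f s + v * g s) (α - 1) * f s ∂μ) *
      (∫ s, spow (u * f s + v * g s) (α - 1) * g s ∂μ) *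
      Real.exp (-(nrm α μ (fun s => u * f s + v * g s) ^ α)) -
    α ^ 2 * (∫ s, spow (u * f s) (α - 1) * f s ∂μ) *
      (∫ s, spow (v * g s) (α - 1) * g s ∂μ) *
      Real.exp (-(nrm α μ (fun s => u * f s) ^ α) - nrm α μ (fun s => v * g s) ^ α)

/-- `(ξ, η)` is jointly SαS with spectral pair `(f, g)`. -/
def JointSAS (α : ℝ) {S : Type*} [MeasurableSpace S] (μ : Measure S) (f g : S → ℝ)
    {Ω : Type*} [MeasurableSpace Ω] (P : Measure Ω) (ξ η : Ω → ℝ) : Prop :=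
  ∀ u v : ℝ, (∫ ω, Complex.exp (Complex.I * ((u * ξ ω + v * η ω : ℝ) : ℂ)) ∂P)
    = Complex.exp (-((nrm α μ (fun s => u * f s + v * g s) ^ α : ℝ) : ℂ))

namespace Sas

/-- The Clarkson defect of `|·|^α`. -/
noncomputable def pk (α x y : ℝ) : ℝ :=
  2 * |x| ^ α + 2 * |y| ^ α - |x + y| ^ α - |x - y| ^ α

lemma sq_half (α x : ℝ) : (x ^ 2) ^ (α / 2) = |x| ^ α := by
  rw [← sq_abs, ← Real.rpow_natCast, ← Real.rpow_mul (abs_nonneg x)]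
  congr 1; push_cast; ring

lemma pk_pos {α : ℝ} (h0 : 0 < α) (h2 : α < 2) {x y : ℝ} (hx : x ≠ 0) (hy : y ≠ 0) :
    0 < pk α x y := by
  have hc := Real.strictConcaveOn_rpow (p := α / 2) (by linarith) (by linarith)
  have hne : (x + y) ^ 2 ≠ (x - y) ^ 2 := by
    intro h
    have : x * y = 0 := by nlinarith
    exact mul_ne_zero hx hy this
  have h := hc.2 (mem_Ici.2 (sq_nonneg (x + y))) (mem_Ici.2 (sq_nonneg (x - y))) hne
    (by norm_num : (0 : ℝ) < 1 / 2) (by norm_num : (0 : ℝ) < 1 / 2) (by norm_num)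
  have e : (1 / 2 : ℝ) • (x + y) ^ 2 + (1 / 2 : ℝ) • (x - y) ^ 2 = x ^ 2 + y ^ 2 := by
    simp only [smul_eq_mul]; ring
  simp only [e] at h
  simp only [sq_half, smul_eq_mul] at h
  have h' := Real.rpow_add_le_add_rpow (p := α / 2) (sq_nonneg x) (sq_nonneg y)
    (by linarith) (by linarith)
  simp only [sq_half] at h'
  unfold pk
  linarith

lemma pk_zero_left {α : ℝ} (h0 : 0 < α) (y : ℝ) : pk α 0 y = 0 := by
  simp [pk, Real.zero_rpow h0.ne']; ring

lemma pk_zero_right {α : ℝ} (h0 : 0 < α) (x : ℝ) : pk α x 0 = 0 := by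
  simp [pk, Real.zero_rpow h0.ne']; ring

lemma pk_nonneg {α : ℝ} (h0 : 0 < α) (h2 : α < 2) (x y : ℝ) : 0 ≤ pk α x y := by
  rcases eq_or_ne x 0 with rfl | hx
  · rw [pk_zero_left h0]
  rcases eq_or_ne y 0 with rfl | hy
  · rw [pk_zero_right h0]
  exact (pk_pos h0 h2 hx hy).le

lemma pk_mul (α c x y : ℝ) : pk α (c * x) (c * y) = |c| ^ α * pk α x y := by
  simp only [pk, ← mul_add, ← mul_sub, abs_mul, Real.mul_rpow (abs_nonneg _) (abs_nonneg _)]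
  ring

lemma pk_comm (α x y : ℝ) : pk α x y = pk α y x := by
  simp only [pk, add_comm x y, abs_sub_comm x y]; ring

lemma pk_abs_right (α x y : ℝ) : pk α x |y| = pk α x y := by
  rcases abs_choice y with h | h <;> rw [h]
  simp only [pk, abs_neg, sub_neg_eq_add, ← sub_eq_add_neg]; ring

lemma pk_abs_left (α x y : ℝ) : pk α |x| y = pk α x y := by
  rw [pk_comm, pk_abs_right, pk_comm]

lemma pk_le {α : ℝ} (h0 : 0 < α) {t : ℝ} (ht : 0 < t) (ht1 : t ≤ 1) :
    pk α 1 t ≤ 3 * t ^ α := by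
  unfold pk
  rw [abs_one, Real.one_rpow, abs_of_pos ht, abs_of_pos (by linarith : 0 < 1 + t),
    abs_of_nonneg (by linarith : 0 ≤ 1 - t)]
  have hp : 0 ≤ t ^ α := Real.rpow_nonneg ht.le _
  rcases le_total 1 α with h | h
  · have h1 := one_add_mul_self_le_rpow_one_add (s := t) (by linarith) h
    have h2 := one_add_mul_self_le_rpow_one_add (s := -t) (by linarith) h
    rw [← sub_eq_add_neg] at h2
    linarith
  · have h1 := Real.one_le_rpow (x := 1 + t) (by linarith) h0.le
    have h2 := Real.rpow_add_le_add_rpow (p := α) (a := 1 - t) (b := t) (by linarith) ht.le h0.le h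
    rw [sub_add_cancel, Real.one_rpow] at h2
    linarith

lemma pk_le' {α : ℝ} (h0 : 0 < α) {t : ℝ} (ht1 : 1 ≤ t) : pk α 1 t ≤ 3 := by
  have ht : 0 < t := by linarith
  have h := pk_mul α t 1 t⁻¹
  rw [mul_one, mul_inv_cancel₀ ht.ne', pk_comm, abs_of_pos ht] at h
  rw [h]
  have h1 := pk_le h0 (inv_pos.2 ht) (inv_le_one_of_one_le₀ ht1)
  rw [Real.inv_rpow ht.le] at h1
  have hp : 0 < t ^ α := Real.rpow_pos_of_pos ht _
  calc t ^ α * pk α 1 t⁻¹ ≤ t ^ α * (3 * (t ^ α)⁻¹) := by gcongr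
    _ = 3 := by field_simp

noncomputable def q (α z t : ℝ) : ℝ := t ^ (-z - 1) * pk α 1 t

lemma measurable_pk (α : ℝ) : Measurable (fun w : ℝ × ℝ => pk α w.1 w.2) := by
  unfold pk; fun_prop

lemma measurable_q (α z : ℝ) : Measurable (q α z) := by
  unfold q pk; fun_prop

lemma q_int {α z : ℝ} (h2 : α < 2) (hz : 0 < z) (hza : z < α) :
    IntegrableOn (q α z) (Ioi 0) := by
  have h0 : 0 < α := hz.trans hza
  rw [← Ioc_union_Ioi_eq_Ioi (zero_le_one' ℝ)]
  refine IntegrableOn.union ?_ ?_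
  · have hi : IntegrableOn (fun t : ℝ => 3 * t ^ (-z - 1 + α)) (Ioc 0 1) :=
      ((intervalIntegral.intervalIntegrable_rpow' (a := 0) (b := 1)
        (by linarith : -1 < -z - 1 + α)).1).const_mul 3
    refine Integrable.mono' hi (measurable_q α z).aestronglyMeasurable ?_
    filter_upwards [ae_restrict_mem measurableSet_Ioc] with t ht
    have hp : 0 ≤ t ^ (-z - 1) := Real.rpow_nonneg ht.1.le _
    rw [q, Real.norm_of_nonneg (mul_nonneg hp (pk_nonneg h0 h2 _ _)), Real.rpow_add ht.1]
    nlinarith [mul_le_mul_of_nonneg_left (pk_le h0 ht.1 ht.2) hp]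
  · have hi : IntegrableOn (fun t : ℝ => 3 * t ^ (-z - 1)) (Ioi 1) :=
      (integrableOn_Ioi_rpow_of_lt (by linarith : -z - 1 < -1) one_pos).const_mul 3
    refine Integrable.mono' hi (measurable_q α z).aestronglyMeasurable ?_
    filter_upwards [ae_restrict_mem measurableSet_Ioi] with t ht
    have ht' : (1 : ℝ) < t := ht
    have hp : 0 ≤ t ^ (-z - 1) := Real.rpow_nonneg (by linarith) _
    rw [q, Real.norm_of_nonneg (mul_nonneg hp (pk_nonneg h0 h2 _ _))]
    nlinarith [mul_le_mul_of_nonneg_left (pk_le' h0 ht'.le) hp]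

lemma q_pos {α z : ℝ} (h0 : 0 < α) (h2 : α < 2) {t : ℝ} (ht : 0 < t) : 0 < q α z t :=
  mul_pos (Real.rpow_pos_of_pos ht _) (pk_pos h0 h2 one_ne_zero ht.ne')

lemma C_pos {α z : ℝ} (h2 : α < 2) (hz : 0 < z) (hza : z < α) :
    0 < ∫ t in Ioi 0, q α z t := by
  have h0 : 0 < α := hz.trans hza
  rw [setIntegral_pos_iff_support_of_nonneg_ae _ (q_int h2 hz hza)]
  · have : Ioi (0 : ℝ) ⊆ Function.support (q α z) ∩ Ioi 0 :=
      fun t ht => ⟨(q_pos h0 h2 ht).ne', ht⟩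
    refine lt_of_lt_of_le ?_ (measure_mono this)
    simp
  · filter_upwards [ae_restrict_mem measurableSet_Ioi] with t ht
    exact (q_pos h0 h2 ht).le

lemma inner_eq {α z : ℝ} (h2 : α < 2) (hz : 0 < z) (hza : z < α) (x y : ℝ) :
    ∫⁻ t in Ioi (0 : ℝ), ENNReal.ofReal (t ^ (-z - 1) * pk α x (t * y))
      = ENNReal.ofReal (∫ t in Ioi 0, q α z t) * ENNReal.ofReal (|x| ^ (α - z) * |y| ^ z) := by
  have h0 : 0 < α := hz.trans hza
  rcases eq_or_ne x 0 with rfl | hx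
  · simp [pk_zero_left h0, Real.zero_rpow (sub_pos.2 hza).ne']
  rcases eq_or_ne y 0 with rfl | hy
  · simp [pk_zero_right h0, Real.zero_rpow hz.ne']
  have hx' := abs_pos.2 hx
  have hy' := abs_pos.2 hy
  set a : ℝ := |y| / |x| with ha
  have hapos : 0 < a := div_pos hy' hx'
  have e : ∀ t ∈ Ioi (0 : ℝ), ENNReal.ofReal (t ^ (-z - 1) * pk α x (t * y))
      = ENNReal.ofReal ((|x| ^ α * a ^ (z + 1)) * q α z (a * t)) := by
    intro t ht
    have ht' : 0 < t := ht
    congr 1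
    have e1 : pk α x (t * y) = |x| ^ α * pk α 1 (a * t) := by
      have := pk_mul α |x| 1 (a * t)
      rw [abs_abs] at this
      rw [← this, mul_one, pk_abs_left, ← pk_abs_right α x (t * y), abs_mul, abs_of_pos ht']
      congr 1
      rw [ha]; field_simp
    rw [e1, q, Real.mul_rpow hapos.le ht'.le]
    have e2 : a ^ (z + 1) * a ^ (-z - 1) = 1 := by
      rw [← Real.rpow_add hapos]; simp
    linear_combination (-(t ^ (-z - 1) * |x| ^ α * pk α 1 (a * t))) * e2
  rw [setLIntegral_congr_fun measurableSet_Ioi e]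
  have hint : IntegrableOn (fun t => (|x| ^ α * a ^ (z + 1)) * q α z (a * t)) (Ioi 0) := by
    refine Integrable.const_mul ?_ _
    have := (integrableOn_Ioi_comp_mul_left_iff (q α z) 0 hapos).2
      (by rw [mul_zero]; exact q_int h2 hz hza)
    exact this
  rw [← ofReal_integral_eq_lintegral_ofReal hint, ← ENNReal.ofReal_mul (C_pos h2 hz hza).le]
  · congr 1
    rw [integral_const_mul, integral_comp_mul_left_Ioi _ _ hapos, mul_zero, smul_eq_mul,
      Real.rpow_add_one hapos.ne', ha, Real.div_rpow hy'.le hx'.le, Real.rpow_sub hx']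
    field_simp
  · filter_upwards [ae_restrict_mem measurableSet_Ioi] with t ht
    exact mul_nonneg (by positivity) (q_pos h0 h2 (mul_pos hapos ht)).le

lemma memLp {S : Type*} [MeasurableSpace S] {μ : Measure S} {α : ℝ} (h0 : 0 < α) {f : S → ℝ}
    (hf : MemLalpha α μ f) : MemLp f (ENNReal.ofReal α) μ := by
  rw [← integrable_norm_rpow_iff hf.1 (by simpa using h0) (by simp)]
  simpa [ENNReal.toReal_ofReal h0.le] using hf.2

lemma int_lin {S : Type*} [MeasurableSpace S] {μ : Measure S} {α : ℝ} (h0 : 0 < α) {f g : S → ℝ}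
    (hf : MemLalpha α μ f) (hg : MemLalpha α μ g) (u v : ℝ) :
    Integrable (fun s => |u * f s + v * g s| ^ α) μ := by
  have h : MemLp (fun s => u * f s + v * g s) (ENNReal.ofReal α) μ :=
    ((memLp h0 hf).const_mul u).add ((memLp h0 hg).const_mul v)
  have := (integrable_norm_rpow_iff h.1 (by simpa using h0) (by simp)).2 h
  simpa [ENNReal.toReal_ofReal h0.le] using this

lemma slice {S : Type*} [MeasurableSpace S] {μ : Measure S} {α : ℝ} (h0 : 0 < α) (h2 : α < 2)
    {f g : S → ℝ} (hf : MemLalpha α μ f) (hg : MemLalpha α μ g) (t : ℝ) :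
    ∫⁻ s, ENNReal.ofReal (pk α (f s) (t * g s)) ∂μ = ENNReal.ofReal
      (2 * (∫ s, |1 * f s + 0 * g s| ^ α ∂μ) + 2 * (∫ s, |0 * f s + t * g s| ^ α ∂μ)
        - (∫ s, |1 * f s + t * g s| ^ α ∂μ) - (∫ s, |1 * f s + (-t) * g s| ^ α ∂μ)) := by
  have i1 := int_lin h0 hf hg 1 0
  have i2 := int_lin h0 hf hg 0 t
  have i3 := int_lin h0 hf hg 1 t
  have i4 := int_lin h0 hf hg 1 (-t)
  have e : ∀ s, pk α (f s) (t * g s) = 2 * |1 * f s + 0 * g s| ^ α + 2 * |0 * f s + t * g s| ^ α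
      - |1 * f s + t * g s| ^ α - |1 * f s + (-t) * g s| ^ α := by
    intro s
    simp [pk, sub_eq_add_neg]
  have j1 : Integrable (fun s => 2 * |1 * f s + 0 * g s| ^ α + 2 * |0 * f s + t * g s| ^ α) μ :=
    (i1.const_mul 2).add (i2.const_mul 2)
  have j2 : Integrable (fun s => 2 * |1 * f s + 0 * g s| ^ α + 2 * |0 * f s + t * g s| ^ α
      - |1 * f s + t * g s| ^ α) μ := j1.sub i3
  have hi := j2.sub i4
  rw [← integral_const_mul, ← integral_const_mul, ← integral_add (i1.const_mul 2) (i2.const_mul 2),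
    ← integral_sub j1 i3,
    ← integral_sub j2 i4,
    ofReal_integral_eq_lintegral_ofReal]
  · exact lintegral_congr fun s => by rw [e]
  · exact hi
  · exact Eventually.of_forall fun s => by
      have := pk_nonneg h0 h2 (f s) (t * g s)
      rw [e] at this
      exact this

lemma key {S : Type*} [MeasurableSpace S] {μ : Measure S} [SigmaFinite μ] {α z : ℝ}
    (h2 : α < 2) (hz : 0 < z) (hza : z < α)
    {f g : S → ℝ} (hf : MemLalpha α μ f) (hg : MemLalpha α μ g) :
    ENNReal.ofReal (∫ t in Ioi 0, q α z t) *
      ∫⁻ s, ENNReal.ofReal (|f s| ^ (α - z) * |g s| ^ z) ∂μ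
    = ∫⁻ t in Ioi (0 : ℝ), ENNReal.ofReal (t ^ (-z - 1)) *
        ∫⁻ s, ENNReal.ofReal (pk α (f s) (t * g s)) ∂μ := by
  have mf := hf.1.aemeasurable
  have mg := hg.1.aemeasurable
  rw [← lintegral_const_mul' _ _ ENNReal.ofReal_ne_top]
  simp_rw [← inner_eq h2 hz hza]
  rw [← lintegral_lintegral_swap]
  · refine setLIntegral_congr_fun measurableSet_Ioi fun t ht => ?_
    have ht' : 0 < t := ht
    rw [← lintegral_const_mul' _ _ ENNReal.ofReal_ne_top]
    refine lintegral_congr fun s => ?_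
    rw [ENNReal.ofReal_mul (Real.rpow_nonneg ht'.le _)]
  · have mf2 : AEMeasurable (fun w : ℝ × S => f w.2) ((volume.restrict (Ioi 0)).prod μ) :=
      mf.comp_snd
    have mg2 : AEMeasurable (fun w : ℝ × S => g w.2) ((volume.restrict (Ioi 0)).prod μ) :=
      mg.comp_snd
    have m1 : AEMeasurable (fun w : ℝ × S => w.1) ((volume.restrict (Ioi 0)).prod μ) :=
      measurable_fst.aemeasurable
    have hp : AEMeasurable (fun w : ℝ × S => pk α (f w.2) (w.1 * g w.2))
        ((volume.restrict (Ioi 0)).prod μ) :=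
      by
      have m5 : AEMeasurable (fun w : ℝ × S => w.1 * g w.2)
        ((volume.restrict (Ioi 0)).prod μ) := m1.mul mg2
      have m6 : AEMeasurable (fun w : ℝ × S => (f w.2, w.1 * g w.2))
        ((volume.restrict (Ioi 0)).prod μ) := mf2.prodMk m5
      exact Measurable.comp_aemeasurable (f := fun w : ℝ × S => (f w.2, w.1 * g w.2))
        (measurable_pk α) m6
    have m3 : AEMeasurable (fun w : ℝ × S => w.1 ^ (-z - 1)) ((volume.restrict (Ioi 0)).prod μ) :=
      (measurable_fst.pow_const _).aemeasurable
    have m4 : AEMeasurable (fun w : ℝ × S => w.1 ^ (-z - 1) * pk α (f w.2) (w.1 * g w.2))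
        ((volume.restrict (Ioi 0)).prod μ) := m3.mul hp
    exact m4.ennreal_ofReal

lemma main {S S' : Type*} [MeasurableSpace S] [MeasurableSpace S']
    {μ : Measure S} {μ' : Measure S'} [SigmaFinite μ] [SigmaFinite μ']
    {α z : ℝ} (h2 : α < 2) (hz : 0 < z) (hza : z < α)
    {f g : S → ℝ} {f' g' : S' → ℝ}
    (hf : MemLalpha α μ f) (hg : MemLalpha α μ g)
    (hf' : MemLalpha α μ' f') (hg' : MemLalpha α μ' g')
    (heq : ∀ u v : ℝ, ∫ s, |u * f s + v * g s| ^ α ∂μ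
      = ∫ s, |u * f' s + v * g' s| ^ α ∂μ') :
    ∫ s, |f s| ^ (α - z) * |g s| ^ z ∂μ = ∫ s, |f' s| ^ (α - z) * |g' s| ^ z ∂μ' := by
  have h0 : 0 < α := hz.trans hza
  have hk := key h2 hz hza hf hg
  have hk' := key h2 hz hza hf' hg'
  simp_rw [slice h0 h2 hf hg, heq, ← slice h0 h2 hf' hg'] at hk
  rw [← hk'] at hk
  have hc := (ENNReal.mul_right_inj
    (ENNReal.ofReal_pos.2 (C_pos h2 hz hza)).ne' ENNReal.ofReal_ne_top).1 hk
  have m : ∀ {T : Type _} [MeasurableSpace T] {ν : Measure T} {a b : T → ℝ},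
      AEMeasurable a ν → AEMeasurable b ν →
      AEStronglyMeasurable (fun s => |a s| ^ (α - z) * |b s| ^ z) ν := by
    intro T _ ν a b ha hb
    have ha' : AEMeasurable (fun s => |a s|) ν := measurable_norm.comp_aemeasurable ha
    have hb' : AEMeasurable (fun s => |b s|) ν := measurable_norm.comp_aemeasurable hb
    exact ((ha'.pow_const _).mul (hb'.pow_const _)).aestronglyMeasurable
  have m' : ∀ {T : Type _} [MeasurableSpace T] {ν : Measure T} {a b : T → ℝ},
      AEMeasurable a ν → AEMeasurable b ν →
      AEStronglyMeasurable (fun s => |a s| ^ (α - z) * |b s| ^ z) ν := by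
    intro T _ ν a b ha hb
    have ha' : AEMeasurable (fun s => |a s|) ν := measurable_norm.comp_aemeasurable ha
    have hb' : AEMeasurable (fun s => |b s|) ν := measurable_norm.comp_aemeasurable hb
    exact ((ha'.pow_const _).mul (hb'.pow_const _)).aestronglyMeasurable
  rw [integral_eq_lintegral_of_nonneg_ae (Eventually.of_forall fun s => by positivity)
      (m hf.1.aemeasurable hg.1.aemeasurable),
    integral_eq_lintegral_of_nonneg_ae (Eventually.of_forall fun s => by positivity)
      (m' hf'.1.aemeasurable hg'.1.aemeasurable), hc]

end Sas

/-- Paper's Proposition 2.1: the dependence measures do not depend on the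
spectral representation. -/
theorem stmt0 {S S' : Type*} [MeasurableSpace S] [MeasurableSpace S']
    (μ : Measure S) (μ' : Measure S') [SigmaFinite μ] [SigmaFinite μ']
    (α : ℝ) (hα0 : 0 < α) (hα2 : α < 2)
    (f g : S → ℝ) (f' g' : S' → ℝ)
    (hf : MemLalpha α μ f) (hg : MemLalpha α μ g)
    (hf' : MemLalpha α μ' f') (hg' : MemLalpha α μ' g')
    (heq : ∀ u v : ℝ, ∫ s, |u * f s + v * g s| ^ α ∂μ
      = ∫ s, |u * f' s + v * g' s| ^ α ∂μ') :
    dep2 α μ f g = dep2 α μ' f' g' ∧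
    (1 < α →
      dep1s α μ f g = dep1s α μ' f' g' ∧ dep1 α μ f g = dep1 α μ' f' g') := by
  have hd1 : 1 < α → dep1s α μ f g = dep1s α μ' f' g' := by
    intro h1
    have h := Sas.main hα2 one_pos h1 hf hg hf' hg' heq
    simpa only [Real.rpow_one, dep1s] using h
  have hd1' : 1 < α → dep1s α μ g f = dep1s α μ' g' f' := by
    intro h1
    have heq' : ∀ u v : ℝ, ∫ s, |u * g s + v * f s| ^ α ∂μ
        = ∫ s, |u * g' s + v * f' s| ^ α ∂μ' := by
      intro u v
      simpa only [add_comm] using heq v u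
    have h := Sas.main hα2 one_pos h1 hg hf hg' hf' heq'
    simpa only [Real.rpow_one, dep1s] using h
  refine ⟨?_, fun h1 => ⟨hd1 h1, ?_⟩⟩
  · have h := Sas.main hα2 (half_pos hα0) (half_lt_self hα0) hf hg hf' hg' heq
    have e : ∀ x y : ℝ, |x * y| ^ (α / 2) = |x| ^ (α - α / 2) * |y| ^ (α / 2) := by
      intro x y
      rw [abs_mul, Real.mul_rpow (abs_nonneg x) (abs_nonneg y), sub_half]
    simp only [dep2, e]
    exact h
  · rw [dep1, dep1, hd1 h1, hd1' h1]
end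

section
/- Let α ∈ (0,2), let f, g ∈ L^α(S, μ) be nonzero and satisfy Assumption (A1) with constant ε₁, and let ξ, η be jointly SαS with spectral pair (f, g). Then for all K, L ∈ L¹(ℝ, dx), the random variables K(ξ), L(η) and K(ξ)L(η) are integrable, the covariance Cov(K(ξ), L(η)) := E[K(ξ)L(η)] - E[K(ξ)]E[L(η)] is well defined, and |Cov(K(ξ), L(η))| ≤ C ‖K‖_{L¹} ‖L‖_{L¹} [f,g]₂, where the constant C depends only on ε₁, α, ‖f‖_α and ‖g‖_α. (Paper's Theorem 2.1.) -/
open MeasureTheory Real Set Filter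
open scoped ENNReal Topology

theorem aux_pow {α : ℝ} (hα0 : 0 < α) (hα2 : α < 2) (a b : ℝ) :
    |(|a + b| ^ α - |a| ^ α - |b| ^ α)| ≤ 2 * |a * b| ^ (α / 2) := by
  have hsq : ∀ x : ℝ, |x| ^ α = (|x| ^ (α / 2)) ^ 2 := by
    intro x
    rw [← Real.rpow_natCast, ← Real.rpow_mul (abs_nonneg x)]
    congr 1
    push_cast
    ring
  have hsub : ∀ x y : ℝ, |x + y| ^ (α / 2) ≤ |x| ^ (α / 2) + |y| ^ (α / 2) := by
    intro x y
    calc |x + y| ^ (α / 2) ≤ (|x| + |y|) ^ (α / 2) :=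
          Real.rpow_le_rpow (abs_nonneg _) (abs_add_le x y) (by linarith)
      _ ≤ _ := Real.rpow_add_le_add_rpow (abs_nonneg _) (abs_nonneg _) (by linarith) (by linarith)
  rw [hsq, hsq a, hsq b, abs_mul, Real.mul_rpow (abs_nonneg a) (abs_nonneg b)]
  have h1 := hsub a b
  have h2 := hsub (a + b) (-b)
  have h3 := hsub (a + b) (-a)
  rw [abs_neg] at h2 h3
  have e2 : a + b + -b = a := by ring
  have e3 : a + b + -a = b := by ring
  rw [e2] at h2
  rw [e3] at h3
  have p1 : 0 ≤ |a| ^ (α / 2) := by positivity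
  have p2 : 0 ≤ |b| ^ (α / 2) := by positivity
  have p3 : 0 ≤ |a + b| ^ (α / 2) := by positivity
  generalize |a| ^ (α / 2) = x at *
  generalize |b| ^ (α / 2) = y at *
  generalize |a + b| ^ (α / 2) = z at *
  rw [abs_le]
  constructor
  · have : |x - y| ≤ |z| := by
      rw [abs_of_nonneg p3, abs_le]; constructor <;> linarith
    have := sq_le_sq.mpr this
    nlinarith
  · nlinarith

theorem aux_integrable {p s b : ℝ} (hs : -1 < s) (hp : 0 < p) (hb : 0 < b) :
    Integrable (fun x : ℝ => |x| ^ s * Real.exp (-b * |x| ^ p)) := by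
  have h1 : IntegrableOn (fun x : ℝ => |x| ^ s * Real.exp (-b * |x| ^ p)) (Ioi 0) := by
    refine (integrableOn_rpow_mul_exp_neg_mul_rpow hs hp hb).congr_fun ?_ measurableSet_Ioi
    intro x hx
    simp only [abs_of_pos (mem_Ioi.mp hx)]
  have h2 : IntegrableOn (fun x : ℝ => |x| ^ s * Real.exp (-b * |x| ^ p)) (Iio 0) := by
    have := h1.comp_neg
    simpa using this
  have h3 := (integrableOn_Iic_iff_integrableOn_Iio (μ := volume)).mpr h2
  have := h3.union h1
  rwa [Iic_union_Ioi, integrableOn_univ] at this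

theorem aux_exp_sub (x y m : ℝ) (hx : m ≤ x) (hy : m ≤ y) :
    |Real.exp (-x) - Real.exp (-y)| ≤ |x - y| * Real.exp (-m) := by
  wlog h : x ≤ y generalizing x y
  · rw [abs_sub_comm, abs_sub_comm x y]
    exact this y x hy hx (by linarith)
  have h1 : Real.exp (-y) ≤ Real.exp (-x) := Real.exp_le_exp.mpr (by linarith)
  rw [abs_of_nonneg (by linarith), abs_sub_comm, abs_of_nonneg (by linarith)]
  have h2 : Real.exp (-y) = Real.exp (-x) * Real.exp (-(y - x)) := by
    rw [← Real.exp_add]; congr 1; ring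
  have h3 := Real.add_one_le_exp (-(y - x))
  have h4 : Real.exp (-x) ≤ Real.exp (-m) := Real.exp_le_exp.mpr (by linarith)
  have h5 := Real.exp_pos (-x)
  calc Real.exp (-x) - Real.exp (-y) ≤ (y - x) * Real.exp (-x) := by rw [h2]; nlinarith
    _ ≤ _ := by gcongr

/-- Fourier representation of test functions. -/
theorem aux_fourier (K : ℝ → ℝ) (hc : HasCompactSupport K)
    (hs : ContDiff ℝ (⊤ : ℕ∞) K) :
    ∃ k : ℝ → ℂ, Integrable k ∧ (∀ w, ‖k w‖ ≤ ∫ x, |K x|) ∧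
      ∀ x, (K x : ℂ) = ∫ w, k w * Complex.exp (Complex.I * ((2 * π * w * x : ℝ) : ℂ)) := by
  have hc' : HasCompactSupport (Complex.ofRealCLM ∘ K) := hc.comp_left rfl
  let F := hc'.toSchwartzMap (Complex.ofRealCLM.contDiff.comp hs)
  refine ⟨FourierTransform.fourier (F : ℝ → ℂ), ?_, ?_, ?_⟩
  · have := (FourierTransform.fourier F).integrable (μ := volume)
    rwa [SchwartzMap.fourier_coe] at this
  · intro w
    rw [Real.fourier_eq]
    refine (norm_integral_le_integral_norm _).trans (le_of_eq ?_)
    simp_rw [Circle.norm_smul]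
    simp [F]
  · intro x
    have h := F.continuous.fourierInv_fourier_eq F.integrable
      (by have := (FourierTransform.fourier F).integrable (μ := volume)
          rwa [SchwartzMap.fourier_coe] at this)
    have h2 := congrFun h x
    rw [Real.fourierInv_eq'] at h2
    have h3 : F x = (K x : ℂ) := by simp [F]
    rw [← h3, ← h2]
    congr 1
    ext w
    simp only [smul_eq_mul]
    rw [mul_comm]
    congr 2
    simp
    ring

theorem aux_measure_le (ν : Measure ℝ) (c : ℝ≥0∞)
    (H : ∀ ψ : ℝ → ℝ, HasCompactSupport ψ → ContDiff ℝ (⊤ : ℕ∞) ψ → (∀ x, 0 ≤ ψ x) →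
      ∫⁻ x, ENNReal.ofReal (ψ x) ∂ν ≤ c * ∫⁻ x, ENNReal.ofReal (ψ x)) (hc : c ≠ ∞) :
    ν ≤ c • volume := by
  have hco : ∀ U : Set ℝ, IsOpen U → ∀ C ⊆ U, IsCompact C → ν C ≤ c * volume U := by
    intro U hU C hCU hC
    obtain ⟨V, hV, hCV, hVU, hVc⟩ := exists_open_between_and_isCompact_closure hC hU hCU
    obtain ⟨ψ, h1, h0, h01⟩ := exists_contMDiffMap_one_nhds_of_subset_interior
      (n := (⊤ : ℕ∞)) (modelWithCornersSelf ℝ ℝ) hC.isClosed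
      (t := V) (by rwa [hV.interior_eq])
    have hψc : HasCompactSupport (ψ : ℝ → ℝ) :=
      HasCompactSupport.intro hVc (fun x hx => h0 x (fun h => hx (subset_closure h)))
    have h := H ψ hψc ψ.contMDiff.contDiff (fun x => (h01 x).1)
    calc ν C = ∫⁻ x in C, 1 ∂ν := by simp
      _ = ∫⁻ x in C, ENNReal.ofReal (ψ x) ∂ν := by
          refine setLIntegral_congr_fun hC.measurableSet ?_
          intro x hx
          have : ψ x = 1 := h1.self_of_nhdsSet x hx
          simp [this]
      _ ≤ ∫⁻ x, ENNReal.ofReal (ψ x) ∂ν := setLIntegral_le_lintegral _ _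
      _ ≤ c * ∫⁻ x, ENNReal.ofReal (ψ x) := h
      _ ≤ c * ∫⁻ x, U.indicator 1 x := by
          gcongr with x
          by_cases hx : x ∈ V
          · have : x ∈ U := hVU (subset_closure hx)
            have h' : ψ x ≤ 1 := (h01 x).2
            simpa [this] using h'
          · simp [h0 x hx]
      _ = c * volume U := by rw [lintegral_indicator_one hU.measurableSet]
  have hloc : IsFiniteMeasureOnCompacts ν := by
    refine ⟨fun C hC => ?_⟩
    obtain ⟨R, hR⟩ := hC.isBounded.subset_ball 0
    refine (hco _ Metric.isOpen_ball C hR hC).trans_lt ?_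
    rw [Real.volume_ball]
    exact ENNReal.mul_lt_top hc.lt_top ENNReal.ofReal_lt_top
  have ho : ∀ U : Set ℝ, IsOpen U → ν U ≤ c * volume U := by
    intro U hU
    rw [hU.measure_eq_iSup_isCompact]
    exact iSup₂_le fun C hCU => iSup_le fun hC => hco U hU C hCU hC
  refine Measure.le_iff'.mpr fun s => ?_
  have hr : (c • (volume : Measure ℝ)).OuterRegular := Measure.OuterRegular.smul _ hc
  rw [s.measure_eq_iInf_isOpen (μ := c • (volume : Measure ℝ))]
  refine le_iInf fun U => le_iInf fun hsU => le_iInf fun hU => ?_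
  exact (measure_mono hsU).trans (ho U hU)

theorem aux_repr {Ω : Type*} [MeasurableSpace Ω] (P : Measure Ω) [IsProbabilityMeasure P]
    (X Y : Ω → ℝ) (hX : Measurable X) (hY : Measurable Y) (φ : ℝ → ℝ → ℂ)
    (hφ : ∀ u v : ℝ, (∫ ω, Complex.exp (Complex.I * ((u * X ω + v * Y ω : ℝ) : ℂ)) ∂P) = φ u v)
    (K L : ℝ → ℝ) (k l : ℝ → ℂ) (hk : Integrable k) (hl : Integrable l)
    (hK : ∀ x, (K x : ℂ) = ∫ w, k w * Complex.exp (Complex.I * ((2 * π * w * x : ℝ) : ℂ)))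
    (hL : ∀ x, (L x : ℂ) = ∫ w, l w * Complex.exp (Complex.I * ((2 * π * w * x : ℝ) : ℂ))) :
    Integrable (fun p : ℝ × ℝ => k p.1 * l p.2 * φ (2 * π * p.1) (2 * π * p.2)) ∧
    ((∫ ω, K (X ω) * L (Y ω) ∂P : ℝ) : ℂ)
      = ∫ p : ℝ × ℝ, k p.1 * l p.2 * φ (2 * π * p.1) (2 * π * p.2) := by
  have hkl : Integrable (fun p : ℝ × ℝ => k p.1 * l p.2) := hk.mul_prod hl
  let H : Ω × (ℝ × ℝ) → ℂ := fun q => k q.2.1 * l q.2.2 *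
    Complex.exp (Complex.I * ((2 * π * q.2.1 * X q.1 + 2 * π * q.2.2 * Y q.1 : ℝ) : ℂ))
  have hH : Integrable H (P.prod volume) := by
    refine (hkl.comp_snd P).mul_bdd (c := 1) ?_ ?_
    · have : Measurable (fun q : Ω × (ℝ × ℝ) => Complex.exp (Complex.I *
        ((2 * π * q.2.1 * X q.1 + 2 * π * q.2.2 * Y q.1 : ℝ) : ℂ))) := by fun_prop
      exact this.aestronglyMeasurable
    · refine ae_of_all _ fun q => ?_
      rw [mul_comm, Complex.norm_exp_ofReal_mul_I]
  have h1 : ∀ p : ℝ × ℝ, ∫ ω, H (ω, p) ∂P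
      = k p.1 * l p.2 * φ (2 * π * p.1) (2 * π * p.2) := by
    intro p
    rw [← hφ, ← integral_const_mul]
  have h2 : ∀ ω, ∫ p, H (ω, p) = (K (X ω) : ℂ) * (L (Y ω) : ℂ) := by
    intro ω
    rw [hK, hL, ← integral_prod_mul]
    refine integral_congr_ae (ae_of_all _ fun p => ?_)
    simp only [H]
    push_cast
    rw [mul_add, Complex.exp_add]
    ring
  constructor
  · have := hH.integral_prod_right
    simpa only [h1] using this
  · have := integral_integral_swap (f := fun ω p => H (ω, p)) hH
    simp only [h1, h2] at this
    rw [← this, ← integral_complex_ofReal]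
    simp

theorem aux_bound1 {Ω : Type*} [MeasurableSpace Ω] (P : Measure Ω) [IsProbabilityMeasure P]
    (X Y : Ω → ℝ) (hX : Measurable X) (hY : Measurable Y) (φ : ℝ → ℝ → ℂ)
    (hφ : ∀ u v : ℝ, (∫ ω, Complex.exp (Complex.I * ((u * X ω + v * Y ω : ℝ) : ℂ)) ∂P) = φ u v)
    (G : ℝ × ℝ → ℝ) (hG : Integrable G)
    (hb : ∀ p : ℝ × ℝ, ‖φ (2 * π * p.1) (2 * π * p.2)‖ ≤ G p)
    (K L : ℝ → ℝ) (hKc : HasCompactSupport K) (hKs : ContDiff ℝ (⊤ : ℕ∞) K)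
    (hLc : HasCompactSupport L) (hLs : ContDiff ℝ (⊤ : ℕ∞) L) :
    |∫ ω, K (X ω) * L (Y ω) ∂P| ≤ (∫ p, G p) * (∫ x, |K x|) * (∫ x, |L x|) := by
  obtain ⟨k, hk, hkn, hK⟩ := aux_fourier K hKc hKs
  obtain ⟨l, hl, hln, hL⟩ := aux_fourier L hLc hLs
  obtain ⟨-, h2⟩ := aux_repr P X Y hX hY φ hφ K L k l hk hl hK hL
  rw [← Real.norm_eq_abs, ← Complex.norm_real, h2]
  have : (∫ p, G p) * (∫ x, |K x|) * (∫ x, |L x|)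
      = ∫ p, ((∫ x, |K x|) * (∫ x, |L x|)) * G p := by
    rw [integral_const_mul]; ring
  rw [this]
  refine norm_integral_le_of_norm_le (hG.const_mul _) (ae_of_all _ fun p => ?_)
  rw [norm_mul, norm_mul]
  gcongr
  · exact hkn _
  · exact hln _
  · exact hb p

theorem aux_bound2 {Ω Ω' : Type*} [MeasurableSpace Ω] (P : Measure Ω) [IsProbabilityMeasure P]
    (X Y : Ω → ℝ) (hX : Measurable X) (hY : Measurable Y) (φ : ℝ → ℝ → ℂ)
    (hφ : ∀ u v : ℝ, (∫ ω, Complex.exp (Complex.I * ((u * X ω + v * Y ω : ℝ) : ℂ)) ∂P) = φ u v)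
    [MeasurableSpace Ω'] (P' : Measure Ω') [IsProbabilityMeasure P']
    (X' Y' : Ω' → ℝ) (hX' : Measurable X') (hY' : Measurable Y') (φ' : ℝ → ℝ → ℂ)
    (hφ' : ∀ u v : ℝ,
      (∫ ω, Complex.exp (Complex.I * ((u * X' ω + v * Y' ω : ℝ) : ℂ)) ∂P') = φ' u v)
    (G : ℝ × ℝ → ℝ) (hG : Integrable G)
    (hb : ∀ p : ℝ × ℝ, ‖φ (2 * π * p.1) (2 * π * p.2) - φ' (2 * π * p.1) (2 * π * p.2)‖ ≤ G p)
    (K L : ℝ → ℝ) (hKc : HasCompactSupport K) (hKs : ContDiff ℝ (⊤ : ℕ∞) K)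
    (hLc : HasCompactSupport L) (hLs : ContDiff ℝ (⊤ : ℕ∞) L) :
    |(∫ ω, K (X ω) * L (Y ω) ∂P) - ∫ ω, K (X' ω) * L (Y' ω) ∂P'|
      ≤ (∫ p, G p) * (∫ x, |K x|) * (∫ x, |L x|) := by
  obtain ⟨k, hk, hkn, hK⟩ := aux_fourier K hKc hKs
  obtain ⟨l, hl, hln, hL⟩ := aux_fourier L hLc hLs
  obtain ⟨h1, h2⟩ := aux_repr P X Y hX hY φ hφ K L k l hk hl hK hL
  obtain ⟨h3, h4⟩ := aux_repr P' X' Y' hX' hY' φ' hφ' K L k l hk hl hK hL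
  rw [← Real.norm_eq_abs, ← Complex.norm_real, Complex.ofReal_sub, h2, h4, ← integral_sub h1 h3]
  have : (∫ p, G p) * (∫ x, |K x|) * (∫ x, |L x|)
      = ∫ p, ((∫ x, |K x|) * (∫ x, |L x|)) * G p := by
    rw [integral_const_mul]; ring
  rw [this]
  refine norm_integral_le_of_norm_le (hG.const_mul _) (ae_of_all _ fun p => ?_)
  rw [← mul_sub, norm_mul, norm_mul]
  gcongr
  · exact hkn _
  · exact hln _
  · exact hb p

theorem aux_dens {Ω : Type*} [MeasurableSpace Ω] (P : Measure Ω) [IsProbabilityMeasure P]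
    (X Y : Ω → ℝ) (hX : Measurable X) (hY : Measurable Y) (M : ℝ) (hM : 0 ≤ M)
    (hT : ∀ K L : ℝ → ℝ, HasCompactSupport K → ContDiff ℝ (⊤ : ℕ∞) K →
      HasCompactSupport L → ContDiff ℝ (⊤ : ℕ∞) L →
      |∫ ω, K (X ω) * L (Y ω) ∂P| ≤ M * (∫ x, |K x|) * (∫ x, |L x|))
    (k l : ℝ → ℝ≥0∞) (hk : Measurable k) (hl : Measurable l) (hk' : ∫⁻ x, k x ≠ ∞) :
    ∫⁻ ω, k (X ω) * l (Y ω) ∂P ≤ ENNReal.ofReal M * (∫⁻ x, k x) * (∫⁻ x, l x) := by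
  have hfin : ∀ ψ : ℝ → ℝ, HasCompactSupport ψ → ContDiff ℝ (⊤ : ℕ∞) ψ → (∀ x, 0 ≤ ψ x) →
      ∫⁻ x, ENNReal.ofReal (ψ x) = ENNReal.ofReal (∫ x, |ψ x|) := by
    intro ψ hc hs h0
    rw [ofReal_integral_eq_lintegral_ofReal (hs.continuous.integrable_of_hasCompactSupport hc).abs
      (ae_of_all _ fun x => abs_nonneg _)]
    simp_rw [abs_of_nonneg (h0 _)]
  -- first step
  have step1 : ∀ ψ : ℝ → ℝ, HasCompactSupport ψ → ContDiff ℝ (⊤ : ℕ∞) ψ → (∀ x, 0 ≤ ψ x) →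
      ∀ k : ℝ → ℝ≥0∞, Measurable k →
      ∫⁻ ω, k (X ω) * ENNReal.ofReal (ψ (Y ω)) ∂P
        ≤ ENNReal.ofReal M * (∫⁻ x, ENNReal.ofReal (ψ x)) * ∫⁻ x, k x := by
    intro ψ hc hs h0 k hk
    have hψm : Measurable (fun ω => ENNReal.ofReal (ψ (Y ω))) :=
      (hs.continuous.measurable.comp hY).ennreal_ofReal
    obtain ⟨B, hB⟩ := hs.continuous.bounded_above_of_compact_support hc
    have key := aux_measure_le ((P.withDensity (fun ω => ENNReal.ofReal (ψ (Y ω)))).map X)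
      (ENNReal.ofReal M * (∫⁻ x, ENNReal.ofReal (ψ x))) (by
        intro θ hc' hs' h0'
        have hθm : Measurable (fun x => ENNReal.ofReal (θ x)) :=
          hs'.continuous.measurable.ennreal_ofReal
        have hθXm : Measurable (fun ω => ENNReal.ofReal (θ (X ω))) := hθm.comp hX
        obtain ⟨B', hB'⟩ := hs'.continuous.bounded_above_of_compact_support hc'
        rw [lintegral_map hθm hX, lintegral_withDensity_eq_lintegral_mul _ hψm hθXm,
          hfin ψ hc hs h0, hfin θ hc' hs' h0', ← ENNReal.ofReal_mul hM, ← ENNReal.ofReal_mul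
            (mul_nonneg hM (integral_nonneg fun _ => abs_nonneg _))]
        have e : ∀ ω, ((fun ω => ENNReal.ofReal (ψ (Y ω))) * fun ω => ENNReal.ofReal (θ (X ω))) ω
            = ENNReal.ofReal (θ (X ω) * ψ (Y ω)) := by
          intro ω
          rw [ENNReal.ofReal_mul (h0' _), Pi.mul_apply, mul_comm]
        have hint : Integrable (fun ω => θ (X ω) * ψ (Y ω)) P := by
          refine Integrable.of_bound (C := B' * B) ?_ (ae_of_all _ fun ω => ?_)
          · exact ((hs'.continuous.measurable.comp hX).mul
              (hs.continuous.measurable.comp hY)).aestronglyMeasurable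
          · rw [norm_mul]
            exact mul_le_mul (hB' _) (hB _) (norm_nonneg _) ((norm_nonneg _).trans (hB' 0))
        calc _ = ∫⁻ ω, ENNReal.ofReal (θ (X ω) * ψ (Y ω)) ∂P := lintegral_congr e
          _ = ENNReal.ofReal (∫ ω, θ (X ω) * ψ (Y ω) ∂P) :=
            (ofReal_integral_eq_lintegral_ofReal hint
              (ae_of_all _ fun ω => mul_nonneg (h0' _) (h0 _))).symm
          _ ≤ _ := by
            refine ENNReal.ofReal_le_ofReal ?_
            refine (le_abs_self _).trans ((hT θ ψ hc' hs' hc hs).trans (le_of_eq ?_))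
            ring)
      (by rw [hfin ψ hc hs h0]; finiteness)
    have h2 := lintegral_mono' key (le_refl k)
    have hkm : Measurable (fun ω => k (X ω)) := hk.comp hX
    rw [lintegral_smul_measure, lintegral_map hk hX,
      lintegral_withDensity_eq_lintegral_mul _ hψm hkm] at h2
    refine le_trans (le_of_eq ?_) h2
    refine lintegral_congr fun ω => ?_
    simp [mul_comm]
  -- second step
  have hkm : Measurable (fun ω => k (X ω)) := hk.comp hX
  have key := aux_measure_le ((P.withDensity (fun ω => k (X ω))).map Y)
    (ENNReal.ofReal M * (∫⁻ x, k x)) (by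
      intro θ hc' hs' h0'
      have hθm : Measurable (fun x => ENNReal.ofReal (θ x)) :=
        hs'.continuous.measurable.ennreal_ofReal
      have hθYm : Measurable (fun ω => ENNReal.ofReal (θ (Y ω))) := hθm.comp hY
      rw [lintegral_map hθm hY, lintegral_withDensity_eq_lintegral_mul _ hkm hθYm]
      refine le_trans (step1 θ hc' hs' h0' k hk) (le_of_eq ?_)
      ring)
    (by finiteness)
  have h2 := lintegral_mono' key (le_refl l)
  have hlm : Measurable (fun ω => l (Y ω)) := hl.comp hY
  rw [lintegral_smul_measure, lintegral_map hl hY,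
    lintegral_withDensity_eq_lintegral_mul _ hkm hlm] at h2
  exact h2

theorem aux_gauss : Integrable (fun x : ℝ => Real.exp (-x ^ 2)) := by
  simpa using integrable_exp_neg_mul_sq (b := 1) one_pos

theorem aux_ac {Ω : Type*} [MeasurableSpace Ω] (P : Measure Ω)
    (X Y : Ω → ℝ) (hX : Measurable X) (hY : Measurable Y) (M : ℝ)
    (hD : ∀ k l : ℝ → ℝ≥0∞, Measurable k → Measurable l → ∫⁻ x, k x ≠ ∞ →
      ∫⁻ ω, k (X ω) * l (Y ω) ∂P ≤ ENNReal.ofReal M * (∫⁻ x, k x) * (∫⁻ x, l x)) :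
    P.map X ≪ volume ∧ P.map Y ≪ volume := by
  constructor
  · refine Measure.AbsolutelyContinuous.mk fun s hs h0 => ?_
    have h := hD (s.indicator 1) 1 (measurable_one.indicator hs) measurable_one
      (by rw [lintegral_indicator_one hs, h0]; simp)
    rw [lintegral_indicator_one hs, h0] at h
    simp only [mul_zero, zero_mul, Pi.one_apply, mul_one, nonpos_iff_eq_zero] at h
    rw [← lintegral_indicator_one hs, lintegral_map (measurable_one.indicator hs) hX, h]
  · refine Measure.AbsolutelyContinuous.mk fun s hs h0 => ?_
    have hg : Measurable (fun x : ℝ => ENNReal.ofReal (Real.exp (-x ^ 2))) := by fun_prop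
    have h := hD (fun x => ENNReal.ofReal (Real.exp (-x ^ 2))) (s.indicator 1) hg
      (measurable_one.indicator hs)
      (by
        have := aux_gauss.lintegral_lt_top
        exact this.ne)
    rw [lintegral_indicator_one hs, h0] at h
    simp only [mul_zero, nonpos_iff_eq_zero] at h
    have hm : Measurable (fun ω => ENNReal.ofReal (Real.exp (-X ω ^ 2)) *
        s.indicator (1 : ℝ → ℝ≥0∞) (Y ω)) :=
      (hg.comp hX).mul ((measurable_one.indicator hs).comp hY)
    have hm2 : Measurable (fun ω => s.indicator (1 : ℝ → ℝ≥0∞) (Y ω)) :=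
      (measurable_one.indicator hs).comp hY
    rw [lintegral_eq_zero_iff hm] at h
    rw [← lintegral_indicator_one hs, lintegral_map (measurable_one.indicator hs) hY,
      lintegral_eq_zero_iff hm2]
    filter_upwards [h] with ω hω
    simp only [Pi.zero_apply, mul_eq_zero, ENNReal.ofReal_eq_zero, not_le.mpr (Real.exp_pos _),
      false_or] at hω
    exact hω

theorem aux_int {Ω : Type*} [MeasurableSpace Ω] (P : Measure Ω)
    (X Y : Ω → ℝ) (hX : Measurable X) (hY : Measurable Y) (M : ℝ) (hM : 0 ≤ M)
    (hD : ∀ k l : ℝ → ℝ≥0∞, Measurable k → Measurable l → ∫⁻ x, k x ≠ ∞ →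
      ∫⁻ ω, k (X ω) * l (Y ω) ∂P ≤ ENNReal.ofReal M * (∫⁻ x, k x) * (∫⁻ x, l x))
    (K L : ℝ → ℝ) (hK : Integrable K) (hL : Integrable L) :
    Integrable (fun ω => K (X ω) * L (Y ω)) P ∧
      |∫ ω, K (X ω) * L (Y ω) ∂P| ≤ M * (∫ x, |K x|) * (∫ x, |L x|) := by
  obtain ⟨aX, aY⟩ := aux_ac P X Y hX hY M hD
  have hKX : AEStronglyMeasurable (fun ω => K (X ω)) P :=
    (hK.1.mono_ac aX).comp_measurable hX
  have hLY : AEStronglyMeasurable (fun ω => L (Y ω)) P :=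
    (hL.1.mono_ac aY).comp_measurable hY
  have eK : ∀ᵐ ω ∂P, K (X ω) = hK.1.mk K (X ω) :=
    ae_of_ae_map hX.aemeasurable (aX.ae_le hK.1.ae_eq_mk)
  have eL : ∀ᵐ ω ∂P, L (Y ω) = hL.1.mk L (Y ω) :=
    ae_of_ae_map hY.aemeasurable (aY.ae_le hL.1.ae_eq_mk)
  have iK : ∫⁻ x, ‖hK.1.mk K x‖ₑ = ENNReal.ofReal (∫ x, |K x|) := by
    have : ∫ x, |K x| = ∫ x, ‖K x‖ := rfl
    rw [this, ofReal_integral_norm_eq_lintegral_enorm hK]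
    refine lintegral_congr_ae ?_
    filter_upwards [hK.1.ae_eq_mk] with x hx
    rw [hx]
  have iL : ∫⁻ x, ‖hL.1.mk L x‖ₑ = ENNReal.ofReal (∫ x, |L x|) := by
    have : ∫ x, |L x| = ∫ x, ‖L x‖ := rfl
    rw [this, ofReal_integral_norm_eq_lintegral_enorm hL]
    refine lintegral_congr_ae ?_
    filter_upwards [hL.1.ae_eq_mk] with x hx
    rw [hx]
  have hb : ∫⁻ ω, ‖K (X ω) * L (Y ω)‖ₑ ∂P
      ≤ ENNReal.ofReal (M * (∫ x, |K x|) * (∫ x, |L x|)) := by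
    have h := hD (fun x => ‖hK.1.mk K x‖ₑ) (fun x => ‖hL.1.mk L x‖ₑ)
      hK.1.stronglyMeasurable_mk.measurable.enorm hL.1.stronglyMeasurable_mk.measurable.enorm
      (by rw [iK]; exact ENNReal.ofReal_ne_top)
    rw [iK, iL, ← ENNReal.ofReal_mul hM, ← ENNReal.ofReal_mul
      (mul_nonneg hM (integral_nonneg fun _ => abs_nonneg _))] at h
    refine le_trans (le_of_eq ?_) h
    refine lintegral_congr_ae ?_
    filter_upwards [eK, eL] with ω h1 h2
    rw [enorm_mul, h1, h2]
  have hint : Integrable (fun ω => K (X ω) * L (Y ω)) P :=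
    ⟨hKX.mul hLY, hb.trans_lt ENNReal.ofReal_lt_top⟩
  refine ⟨hint, ?_⟩
  have h3 : |∫ ω, K (X ω) * L (Y ω) ∂P| ≤ ∫ ω, ‖K (X ω) * L (Y ω)‖ ∂P :=
    norm_integral_le_integral_norm (fun ω => K (X ω) * L (Y ω))
  refine h3.trans ?_
  have h4 : 0 ≤ M * (∫ x, |K x|) * (∫ x, |L x|) :=
    mul_nonneg (mul_nonneg hM (integral_nonneg fun _ => abs_nonneg _))
      (integral_nonneg fun _ => abs_nonneg _)
  rw [← ENNReal.ofReal_le_ofReal_iff h4, ofReal_integral_norm_eq_lintegral_enorm hint]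
  exact hb

theorem aux_approx (K : ℝ → ℝ) (hK : Integrable K) (ε : ℝ) (hε : 0 < ε) :
    ∃ K' : ℝ → ℝ, HasCompactSupport K' ∧ ContDiff ℝ (⊤ : ℕ∞) K' ∧ Integrable K' ∧
      ∫ x, |K x - K' x| ≤ ε := by
  obtain ⟨g, h1, h2, h3⟩ := (memLp_one_iff_integrable.mpr hK).exist_eLpNorm_sub_le
    ENNReal.one_ne_top le_rfl hε
  have hg : Integrable g := h2.continuous.integrable_of_hasCompactSupport h1
  refine ⟨g, h1, h2, hg, ?_⟩
  rw [eLpNorm_one_eq_lintegral_enorm, ← ofReal_integral_norm_eq_lintegral_enorm (hK.sub hg),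
    ENNReal.ofReal_le_ofReal_iff hε.le] at h3
  exact h3

theorem aux_final {Ω Ω' : Type} [MeasurableSpace Ω] (P : Measure Ω)
    (X Y : Ω → ℝ) (hX : Measurable X) (hY : Measurable Y)
    [MeasurableSpace Ω'] (P' : Measure Ω')
    (X' Y' : Ω' → ℝ) (hX' : Measurable X') (hY' : Measurable Y') (M : ℝ) (hM : 0 ≤ M)
    (hD : ∀ k l : ℝ → ℝ≥0∞, Measurable k → Measurable l → ∫⁻ x, k x ≠ ∞ →
      ∫⁻ ω, k (X ω) * l (Y ω) ∂P ≤ ENNReal.ofReal M * (∫⁻ x, k x) * (∫⁻ x, l x))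
    (hD' : ∀ k l : ℝ → ℝ≥0∞, Measurable k → Measurable l → ∫⁻ x, k x ≠ ∞ →
      ∫⁻ ω, k (X' ω) * l (Y' ω) ∂P' ≤ ENNReal.ofReal M * (∫⁻ x, k x) * (∫⁻ x, l x))
    (D : ℝ) (hD0 : 0 ≤ D)
    (hT : ∀ K L : ℝ → ℝ, HasCompactSupport K → ContDiff ℝ (⊤ : ℕ∞) K →
      HasCompactSupport L → ContDiff ℝ (⊤ : ℕ∞) L →
      |(∫ ω, K (X ω) * L (Y ω) ∂P) - ∫ ω, K (X' ω) * L (Y' ω) ∂P'|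
        ≤ D * (∫ x, |K x|) * (∫ x, |L x|))
    (K L : ℝ → ℝ) (hK : Integrable K) (hL : Integrable L) :
    |(∫ ω, K (X ω) * L (Y ω) ∂P) - ∫ ω, K (X' ω) * L (Y' ω) ∂P'|
        ≤ D * (∫ x, |K x|) * (∫ x, |L x|) := by
  set a := ∫ x, |K x| with ha
  set b := ∫ x, |L x| with hb
  have ha0 : 0 ≤ a := integral_nonneg fun _ => abs_nonneg _
  have hb0 : 0 ≤ b := integral_nonneg fun _ => abs_nonneg _
  have main : ∀ ε : ℝ, 0 < ε → |(∫ ω, K (X ω) * L (Y ω) ∂P) - ∫ ω, K (X' ω) * L (Y' ω) ∂P'|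
      ≤ D * (a + ε) * (b + ε) + 2 * (M * ε * b) + 2 * (M * (a + ε) * ε) := by
    intro ε hε
    obtain ⟨K', hc, hs, hi, he⟩ := aux_approx K hK ε hε
    obtain ⟨L', hc', hs', hi', he'⟩ := aux_approx L hL ε hε
    have hnorm : ∀ F F' : ℝ → ℝ, Integrable F → Integrable F' → ∫ x, |F x - F' x| ≤ ε →
        ∫ x, |F' x| ≤ (∫ x, |F x|) + ε := by
      intro F F' h1 h2 h3
      calc ∫ x, |F' x| ≤ ∫ x, (|F x| + |F x - F' x|) := by
            refine integral_mono h2.abs (h1.abs.add (h1.sub h2).abs) fun x => ?_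
            have := abs_sub_abs_le_abs_sub (F' x) (F x)
            rw [abs_sub_comm] at this
            simp only
            linarith
        _ = (∫ x, |F x|) + ∫ x, |F x - F' x| := integral_add h1.abs (h1.sub h2).abs
        _ ≤ _ := by gcongr
    have hKa := hnorm K K' hK hi he
    have hLb := hnorm L L' hL hi' he'
    have dec : ∀ {Ω : Type} [MeasurableSpace Ω] (P : Measure Ω)
        (X Y : Ω → ℝ) (_ : Measurable X) (_ : Measurable Y)
        (_ : ∀ k l : ℝ → ℝ≥0∞, Measurable k → Measurable l → ∫⁻ x, k x ≠ ∞ →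
          ∫⁻ ω, k (X ω) * l (Y ω) ∂P ≤ ENNReal.ofReal M * (∫⁻ x, k x) * (∫⁻ x, l x)),
        |(∫ ω, K (X ω) * L (Y ω) ∂P) - ∫ ω, K' (X ω) * L' (Y ω) ∂P|
          ≤ M * ε * b + M * (a + ε) * ε := by
      intro Ω _ P X Y hX hY hD
      obtain ⟨i1, -⟩ := aux_int P X Y hX hY M hM hD K L hK hL
      obtain ⟨i2, -⟩ := aux_int P X Y hX hY M hM hD K' L' hi hi'
      obtain ⟨i3, b3⟩ := aux_int P X Y hX hY M hM hD (fun x => K x - K' x) L (hK.sub hi) hL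
      obtain ⟨i4, b4⟩ := aux_int P X Y hX hY M hM hD K' (fun x => L x - L' x) hi (hL.sub hi')
      have e : (∫ ω, K (X ω) * L (Y ω) ∂P) - ∫ ω, K' (X ω) * L' (Y ω) ∂P
          = (∫ ω, (K (X ω) - K' (X ω)) * L (Y ω) ∂P)
            + ∫ ω, K' (X ω) * (L (Y ω) - L' (Y ω)) ∂P := by
        rw [← integral_sub i1 i2, ← integral_add i3 i4]
        congr 1
        ext ω
        ring
      rw [e]
      refine (abs_add_le _ _).trans (add_le_add (b3.trans ?_) (b4.trans ?_))
      · gcongr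
      · gcongr
    have d1 := dec P X Y hX hY hD
    have d2 := dec P' X' Y' hX' hY' hD'
    have t : |(∫ ω, K' (X ω) * L' (Y ω) ∂P) - ∫ ω, K' (X' ω) * L' (Y' ω) ∂P'|
        ≤ D * (a + ε) * (b + ε) := by
      refine (hT K' L' hc hs hc' hs').trans ?_
      gcongr
    rw [abs_le] at d1 d2 t ⊢
    constructor <;> linarith [d1.1, d1.2, d2.1, d2.2, t.1, t.2]
  have hlim : Tendsto (fun ε : ℝ => D * (a + ε) * (b + ε) + 2 * (M * ε * b)
      + 2 * (M * (a + ε) * ε)) (𝓝[>] 0) (𝓝 (D * a * b)) := by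
    have : Continuous (fun ε : ℝ => D * (a + ε) * (b + ε) + 2 * (M * ε * b)
      + 2 * (M * (a + ε) * ε)) := by fun_prop
    have h := (this.tendsto 0).mono_left (nhdsWithin_le_nhds (s := Ioi 0))
    simpa using h
  refine ge_of_tendsto hlim ?_
  filter_upwards [self_mem_nhdsWithin] with ε hε using main ε hε

theorem aux_est {α : ℝ} (hα0 : 0 < α) (hα2 : α < 2) {S : Type*} [MeasurableSpace S]
    (μ : Measure S) (f g : S → ℝ) (hf : MemLalpha α μ f) (hg : MemLalpha α μ g) (u v : ℝ) :
    |nrm α μ (fun s => u * f s + v * g s) ^ α - |u| ^ α * nrm α μ f ^ α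
      - |v| ^ α * nrm α μ g ^ α| ≤ 2 * |u * v| ^ (α / 2) * dep2 α μ f g := by
  have hn : ∀ h : S → ℝ, nrm α μ h ^ α = ∫ s, |h s| ^ α ∂μ := by
    intro h
    unfold nrm
    rw [← Real.rpow_mul (integral_nonneg fun _ => by positivity), one_div,
      inv_mul_cancel₀ hα0.ne', Real.rpow_one]
  rw [hn, hn, hn]
  have hmeas : ∀ (h : S → ℝ) (p : ℝ), AEStronglyMeasurable h μ → 
      AEStronglyMeasurable (fun s => |h s| ^ p) μ := by
    intro h p hh
    exact (hh.aemeasurable.abs.pow_const p).aestronglyMeasurable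
  have hfg : Integrable (fun s => |f s * g s| ^ (α / 2)) μ := by
    refine Integrable.mono' (hf.2.add hg.2) (hmeas _ _ (hf.1.mul hg.1)) (ae_of_all _ fun s => ?_)
    rw [Real.norm_of_nonneg (by positivity), abs_mul,
      Real.mul_rpow (abs_nonneg _) (abs_nonneg _)]
    have hsq : ∀ x : ℝ, |x| ^ α = (|x| ^ (α / 2)) ^ 2 := by
      intro x
      rw [← Real.rpow_natCast, ← Real.rpow_mul (abs_nonneg x)]
      congr 1
      push_cast
      ring
    simp only [Pi.add_apply, hsq]
    have p1 : 0 ≤ |f s| ^ (α / 2) := by positivity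
    have p2 : 0 ≤ |g s| ^ (α / 2) := by positivity
    nlinarith [sq_nonneg (|f s| ^ (α / 2) - |g s| ^ (α / 2))]
  have ef : ∀ s, |u * f s| ^ α = |u| ^ α * |f s| ^ α := fun s => by
    rw [abs_mul, Real.mul_rpow (abs_nonneg _) (abs_nonneg _)]
  have eg : ∀ s, |v * g s| ^ α = |v| ^ α * |g s| ^ α := fun s => by
    rw [abs_mul, Real.mul_rpow (abs_nonneg _) (abs_nonneg _)]
  have i1 : Integrable (fun s => |u| ^ α * |f s| ^ α) μ := hf.2.const_mul _
  have i2 : Integrable (fun s => |v| ^ α * |g s| ^ α) μ := hg.2.const_mul _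
  have i3 : Integrable (fun s => 2 * |u * v| ^ (α / 2) * |f s * g s| ^ (α / 2)) μ :=
    hfg.const_mul _
  have pt : ∀ s, |(|u * f s + v * g s| ^ α - |u| ^ α * |f s| ^ α - |v| ^ α * |g s| ^ α)|
      ≤ 2 * |u * v| ^ (α / 2) * |f s * g s| ^ (α / 2) := by
    intro s
    have := aux_pow hα0 hα2 (u * f s) (v * g s)
    rw [ef, eg] at this
    refine this.trans (le_of_eq ?_)
    rw [mul_assoc 2, ← Real.mul_rpow (abs_nonneg _) (abs_nonneg _), ← abs_mul]
    congr 3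
    ring
  have i0 : Integrable (fun s => |u * f s + v * g s| ^ α) μ := by
    refine Integrable.mono' ((i1.add i2).add i3) (hmeas _ _ ((hf.1.const_mul u).add
      (hg.1.const_mul v))) (ae_of_all _ fun s => ?_)
    rw [Real.norm_of_nonneg (by positivity)]
    have := (abs_le.mp (pt s)).2
    simp only [Pi.add_apply]
    linarith
  have e : (∫ s, |u * f s + v * g s| ^ α ∂μ) - |u| ^ α * (∫ s, |f s| ^ α ∂μ)
      - |v| ^ α * (∫ s, |g s| ^ α ∂μ)
      = ∫ s, (|u * f s + v * g s| ^ α - |u| ^ α * |f s| ^ α - |v| ^ α * |g s| ^ α) ∂μ := by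
    have i01 : Integrable (fun s => |u * f s + v * g s| ^ α - |u| ^ α * |f s| ^ α) μ := i0.sub i1
    rw [integral_sub i01 i2, integral_sub i0 i1, integral_const_mul, integral_const_mul]
  rw [e]
  have e2 : 2 * |u * v| ^ (α / 2) * dep2 α μ f g
      = ∫ s, 2 * |u * v| ^ (α / 2) * |f s * g s| ^ (α / 2) ∂μ := by
    rw [integral_const_mul]; rfl
  rw [e2, ← Real.norm_eq_abs]
  exact norm_integral_le_of_norm_le i3 (ae_of_all _ pt)

theorem aux_lower {α ε₁ nf ng : ℝ} (hα0 : 0 < α) (hα2 : α < 2) (hε₁ : 0 < ε₁)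
    (hnf : 0 < nf) (hng : 0 < ng) {S : Type*} [MeasurableSpace S]
    (μ : Measure S) (f g : S → ℝ) (hf : MemLalpha α μ f) (hg : MemLalpha α μ g)
    (hfn : nrm α μ f = nf) (hgn : nrm α μ g = ng) (hA : A1 α ε₁ μ f g) :
    ε₁ ≤ 1 ∧ ∀ u v : ℝ, ε₁ * (|u| ^ α * nf ^ α + |v| ^ α * ng ^ α)
      ≤ nrm α μ (fun s => u * f s + v * g s) ^ α := by
  unfold A1 at hA
  rw [hfn, hgn] at hA
  have hd : 0 ≤ dep2 α μ f g := integral_nonneg fun _ => by positivity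
  have hp : 0 < nf ^ (α / 2) * ng ^ (α / 2) := by positivity
  have hε : ε₁ ≤ 1 := by
    by_contra h
    push Not at h
    nlinarith
  refine ⟨hε, fun u v => ?_⟩
  have h := (abs_le.mp (aux_est hα0 hα2 μ f g hf hg u v)).1
  rw [hfn, hgn] at h
  have hsq : ∀ x : ℝ, 0 ≤ x → x ^ α = (x ^ (α / 2)) ^ 2 := by
    intro x hx
    rw [← Real.rpow_natCast, ← Real.rpow_mul hx]
    congr 1
    push_cast
    ring
  rw [abs_mul, Real.mul_rpow (abs_nonneg _) (abs_nonneg _)] at h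
  rw [hsq _ (abs_nonneg u), hsq _ (abs_nonneg v), hsq _ hnf.le, hsq _ hng.le] at h ⊢
  have hx : 0 ≤ |u| ^ (α / 2) := by positivity
  have hy : 0 ≤ |v| ^ (α / 2) := by positivity
  generalize |u| ^ (α / 2) = x at *
  generalize |v| ^ (α / 2) = y at *
  generalize nf ^ (α / 2) = a at *
  generalize ng ^ (α / 2) = b at *
  generalize dep2 α μ f g = d at *
  have h1 : x * y * d ≤ x * y * ((1 - ε₁) * (a * b)) := by
    apply mul_le_mul_of_nonneg_left _ (by positivity)
    linarith
  have h2 : 0 ≤ (1 - ε₁) * (x * a - y * b) ^ 2 := mul_nonneg (by linarith) (sq_nonneg _)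
  nlinarith

/-- Paper's Theorem 2.1. -/
theorem stmt2 (α ε₁ nf ng : ℝ) (hα0 : 0 < α) (hα2 : α < 2) (hε₁ : 0 < ε₁)
    (hnf : 0 < nf) (hng : 0 < ng) :
    ∃ C > (0:ℝ), ∀ (S : Type) [MeasurableSpace S] (μ : Measure S) [SigmaFinite μ]
      (f g : S → ℝ), MemLalpha α μ f → MemLalpha α μ g →
      nrm α μ f = nf → nrm α μ g = ng → A1 α ε₁ μ f g →
      ∀ (Ω : Type) [MeasurableSpace Ω] (P : Measure Ω) [IsProbabilityMeasure P]
        (ξ η : Ω → ℝ), Measurable ξ → Measurable η → JointSAS α μ f g P ξ η →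
        ∀ K L : ℝ → ℝ, Integrable K volume → Integrable L volume →
          Integrable (fun ω => K (ξ ω)) P ∧ Integrable (fun ω => L (η ω)) P ∧
          Integrable (fun ω => K (ξ ω) * L (η ω)) P ∧
          |(∫ ω, K (ξ ω) * L (η ω) ∂P) - (∫ ω, K (ξ ω) ∂P) * (∫ ω, L (η ω) ∂P)|
            ≤ C * (∫ x, |K x|) * (∫ x, |L x|) * dep2 α μ f g := by

  have hc1 : 0 < ε₁ * nf ^ α := by positivity
  have hc2 : 0 < ε₁ * ng ^ α := by positivity
  have hpi : (2 * π : ℝ) ≠ 0 := by positivity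
  let w1 : ℝ → ℝ → ℝ := fun s x => |x| ^ s * Real.exp (-(ε₁ * nf ^ α) * |x| ^ α)
  let w2 : ℝ → ℝ → ℝ := fun s x => |x| ^ s * Real.exp (-(ε₁ * ng ^ α) * |x| ^ α)
  let W : ℝ → ℝ × ℝ → ℝ := fun s p => w1 s (2 * π * p.1) * w2 s (2 * π * p.2)
  have hW : ∀ s : ℝ, 0 ≤ s → Integrable (W s) := by
    intro s hs
    have j1 : Integrable (fun x => w1 s (2 * π * x)) :=
      (aux_integrable (by linarith) hα0 hc1).comp_mul_left' hpi
    have j2 : Integrable (fun x => w2 s (2 * π * x)) :=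
      (aux_integrable (by linarith) hα0 hc2).comp_mul_left' hpi
    exact j1.mul_prod j2
  have hW0 : ∀ s p, 0 ≤ W s p := fun s p => by
    simp only [W, w1, w2]; positivity
  have hWe : ∀ s p, W s p = |(2 * π * p.1) * (2 * π * p.2)| ^ s *
      Real.exp (-(ε₁ * (|2 * π * p.1| ^ α * nf ^ α + |2 * π * p.2| ^ α * ng ^ α))) := by
    intro s p
    rw [abs_mul (2 * π * p.1), Real.mul_rpow (abs_nonneg _) (abs_nonneg _)]
    simp only [W, w1, w2]
    rw [mul_mul_mul_comm, ← Real.exp_add]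
    congr 2
    ring
  have hI0 : 0 ≤ ∫ p, W (α / 2) p := integral_nonneg (hW0 _)
  refine ⟨2 * (∫ p, W (α / 2) p) + 1, by positivity, ?_⟩
  intro S _ μ _ f g hf hg hfn hgn hA Ω _ P _ ξ η hξ hη hJ K L hK hL
  obtain ⟨hε1, hlow⟩ := aux_lower hα0 hα2 hε₁ hnf hng μ f g hf hg hfn hgn hA
  have hest := aux_est hα0 hα2 μ f g hf hg
  rw [hfn, hgn] at hest
  have hd : 0 ≤ dep2 α μ f g := integral_nonneg fun _ => by positivity
  have hβ : α / 2 ≠ 0 := by positivity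
  have hu0 : ∀ u : ℝ, nrm α μ (fun s => u * f s + 0 * g s) ^ α = |u| ^ α * nf ^ α := by
    intro u
    have := hest u 0
    rw [mul_zero, abs_zero, Real.zero_rpow hβ, Real.zero_rpow hα0.ne', mul_zero, zero_mul,
      zero_mul, sub_zero] at this
    linarith [abs_nonpos_iff.mp this]
  have hv0 : ∀ v : ℝ, nrm α μ (fun s => 0 * f s + v * g s) ^ α = |v| ^ α * ng ^ α := by
    intro u
    have := hest 0 u
    rw [zero_mul, abs_zero, Real.zero_rpow hβ, Real.zero_rpow hα0.ne', mul_zero, zero_mul,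
      zero_mul, sub_zero] at this
    linarith [abs_nonpos_iff.mp this]
  let φ : ℝ → ℝ → ℂ := fun u v =>
    Complex.exp (-((nrm α μ (fun s => u * f s + v * g s) ^ α : ℝ) : ℂ))
  let φ' : ℝ → ℝ → ℂ := fun u v =>
    Complex.exp (-((|u| ^ α * nf ^ α + |v| ^ α * ng ^ α : ℝ) : ℂ))
  have hφ : ∀ u v : ℝ,
    (∫ ω, Complex.exp (Complex.I * ((u * ξ ω + v * η ω : ℝ) : ℂ)) ∂P) = φ u v := hJ
  have hφ' : ∀ u v : ℝ, (∫ ω, Complex.exp (Complex.I * ((u * ξ ω.1 + v * η ω.2 : ℝ) : ℂ))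
      ∂(P.prod P)) = φ' u v := by
    intro u v
    have e1 := hJ u 0
    have e2 := hJ 0 v
    rw [hu0] at e1
    rw [hv0] at e2
    have : φ' u v = Complex.exp (-((|u| ^ α * nf ^ α : ℝ) : ℂ)) *
        Complex.exp (-((|v| ^ α * ng ^ α : ℝ) : ℂ)) := by
      rw [← Complex.exp_add]
      simp only [φ']
      congr 1
      push_cast
      ring
    rw [this, ← e1, ← e2, ← integral_prod_mul]
    refine integral_congr_ae (ae_of_all _ fun ω => ?_)
    simp only
    rw [← Complex.exp_add]
    congr 1
    push_cast
    ring
  have hb : ∀ p : ℝ × ℝ, ‖φ (2 * π * p.1) (2 * π * p.2)‖ ≤ W 0 p := by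
    intro p
    rw [hWe, Real.rpow_zero, one_mul]
    simp only [φ]
    rw [← Complex.ofReal_neg, Complex.norm_exp_ofReal]
    exact Real.exp_le_exp.mpr (neg_le_neg (hlow _ _))
  have hnn : ∀ u v : ℝ, ε₁ * (|u| ^ α * nf ^ α + |v| ^ α * ng ^ α)
      ≤ |u| ^ α * nf ^ α + |v| ^ α * ng ^ α := by
    intro u v
    have : 0 ≤ |u| ^ α * nf ^ α + |v| ^ α * ng ^ α := by positivity
    nlinarith
  have hb' : ∀ p : ℝ × ℝ, ‖φ' (2 * π * p.1) (2 * π * p.2)‖ ≤ W 0 p := by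
    intro p
    rw [hWe, Real.rpow_zero, one_mul]
    simp only [φ']
    rw [← Complex.ofReal_neg, Complex.norm_exp_ofReal]
    exact Real.exp_le_exp.mpr (neg_le_neg (hnn _ _))
  have hbd : ∀ p : ℝ × ℝ, ‖φ (2 * π * p.1) (2 * π * p.2) - φ' (2 * π * p.1) (2 * π * p.2)‖
      ≤ 2 * dep2 α μ f g * W (α / 2) p := by
    intro p
    simp only [φ, φ']
    rw [← Complex.ofReal_neg, ← Complex.ofReal_neg, ← Complex.ofReal_exp, ← Complex.ofReal_exp,
      ← Complex.ofReal_sub, Complex.norm_real, Real.norm_eq_abs]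
    refine (aux_exp_sub _ _ _ (hlow _ _) (hnn _ _)).trans ?_
    rw [hWe]
    have h := hest (2 * π * p.1) (2 * π * p.2)
    rw [sub_sub] at h
    calc _ ≤ 2 * |2 * π * p.1 * (2 * π * p.2)| ^ (α / 2) * dep2 α μ f g *
          Real.exp (-(ε₁ * (|2 * π * p.1| ^ α * nf ^ α + |2 * π * p.2| ^ α * ng ^ α))) := by
            gcongr
      _ = _ := by ring
  have hξ1 : Measurable (fun ω : Ω × Ω => ξ ω.1) := hξ.comp measurable_fst
  have hη2 : Measurable (fun ω : Ω × Ω => η ω.2) := hη.comp measurable_snd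
  have hM0 : 0 ≤ ∫ p, W 0 p := integral_nonneg (hW0 0)
  have hD := aux_dens P ξ η hξ hη (∫ p, W 0 p) hM0 (fun K L a b c d =>
    aux_bound1 P ξ η hξ hη φ hφ (W 0) (hW 0 le_rfl) hb K L a b c d)
  have hD' := aux_dens (P.prod P) (fun ω => ξ ω.1) (fun ω => η ω.2) hξ1 hη2
    (∫ p, W 0 p) hM0 (fun K L a b c d =>
    aux_bound1 (P.prod P) _ _ hξ1 hη2 φ' hφ' (W 0) (hW 0 le_rfl) hb' K L a b c d)
  have fin := aux_final P ξ η hξ hη (P.prod P) (fun ω => ξ ω.1) (fun ω => η ω.2) hξ1 hη2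
    (∫ p, W 0 p) hM0 hD hD' (∫ p, 2 * dep2 α μ f g * W (α / 2) p)
    (integral_nonneg fun p => mul_nonneg (by positivity) (hW0 _ _))
    (fun K L a b c d => aux_bound2 P ξ η hξ hη φ hφ (P.prod P) _ _ hξ1 hη2 φ' hφ' _
      ((hW (α / 2) (by positivity)).const_mul _) hbd K L a b c d) K L hK hL
  rw [integral_prod_mul (fun ω => K (ξ ω)) (fun ω => L (η ω)), integral_const_mul] at fin
  refine ⟨?_, ?_, ?_, ?_⟩
  · have h := (aux_int (P.prod P) (fun ω => ξ ω.1) (fun ω => η ω.2) hξ1 hη2 _ hM0 hD' K _ hK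
      aux_gauss).1
    obtain ⟨ω, hω⟩ := h.prod_left_ae.exists
    exact (integrable_mul_const_iff (Real.exp_pos (-η ω ^ 2)).ne'.isUnit _).mp hω
  · have h := (aux_int (P.prod P) (fun ω => ξ ω.1) (fun ω => η ω.2) hξ1 hη2 _ hM0 hD' _ L
      aux_gauss hL).1
    obtain ⟨ω, hω⟩ := h.prod_right_ae.exists
    exact (integrable_const_mul_iff (Real.exp_pos (-ξ ω ^ 2)).ne'.isUnit _).mp hω
  · exact (aux_int P ξ η hξ hη _ hM0 hD K L hK hL).1
  · refine fin.trans ?_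
    have ha0 : 0 ≤ ∫ x, |K x| := integral_nonneg fun _ => abs_nonneg _
    have hb0 : 0 ≤ ∫ x, |L x| := integral_nonneg fun _ => abs_nonneg _
    have : 0 ≤ (∫ x, |K x|) * (∫ x, |L x|) * dep2 α μ f g := by positivity
    linarith
end
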